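/- (Hardy's inequality, continuity of the right Hardy operator.) Let 1 < p < ∞, 0 < R < ∞, and β, γ ∈ ℝ satisfy β + 1/p > 0 and γ ≤ β + 1. Then there exists a constant C > 0 such that for every measurable function f : (0,R) → [0,∞), ∫₀^R x^{βp} (∫_x^R f(t) dt)^p dx ≤ C^p ∫₀^R x^{γp} f(x)^p dx. In other words, the operator f ↦ (x ↦ ∫_x^R f(t)dt) is continuous from L_{p,γ}((0,R)) to L_{p,β}((0,R)). -/

import Mathlib

open MeasureTheory Set ENNReal

lemma hardy_aux_Ioi (s x : ℝ) (hs : 0 < s) (hx : 0 < x) :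
    ∫⁻ t in Ioi x, ENNReal.ofReal (t ^ (-1 - s)) = ENNReal.ofReal (x ^ (-s) / s) := by
  rw [← ofReal_integral_eq_lintegral_ofReal]
  · rw [integral_Ioi_rpow_of_lt (by linarith) hx]
    congr 1
    rw [show -1 - s + 1 = -s by ring, neg_div_neg_eq]
  · exact integrableOn_Ioi_rpow_of_lt (by linarith) hx
  · filter_upwards [ae_restrict_mem measurableSet_Ioi] with t ht
    exact Real.rpow_nonneg (hx.le.trans (le_of_lt ht)) _

lemma hardy_aux_Ioo (s t : ℝ) (hs : 0 < s) (ht : 0 < t) :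
    ∫⁻ x in Ioo 0 t, ENNReal.ofReal (x ^ (s - 1)) = ENNReal.ofReal (t ^ s / s) := by
  rw [← ofReal_integral_eq_lintegral_ofReal]
  · rw [← integral_Ioc_eq_integral_Ioo, ← intervalIntegral.integral_of_le ht.le,
      integral_rpow (Or.inl (by linarith))]
    congr 1
    rw [show s - 1 + 1 = s by ring, Real.zero_rpow hs.ne', sub_zero]
  · have := (intervalIntegral.intervalIntegrable_rpow' (a := 0) (b := t)
      (r := s - 1) (by linarith))
    rw [intervalIntegrable_iff_integrableOn_Ioo_of_le ht.le] at this
    exact this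
  · filter_upwards [ae_restrict_mem measurableSet_Ioo] with x hx
    exact Real.rpow_nonneg hx.1.le _

lemma hardy_aux_swap (R : ℝ) (c F : ℝ → ℝ≥0∞) (hc : Measurable c) (hF : Measurable F) :
    ∫⁻ x in Ioo 0 R, c x * ∫⁻ t in Ioo x R, F t
      = ∫⁻ t in Ioo 0 R, F t * ∫⁻ x in Ioo 0 t, c x := by
  have hm : Measurable (fun z : ℝ × ℝ => {z : ℝ × ℝ | z.1 < z.2}.indicator
      (fun z => c z.1 * F z.2) z) :=
    ((hc.comp measurable_fst).mul (hF.comp measurable_snd)).indicator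
      (measurableSet_lt measurable_fst measurable_snd)
  have h1 : ∫⁻ x in Ioo 0 R, c x * ∫⁻ t in Ioo x R, F t
      = ∫⁻ x in Ioo 0 R, ∫⁻ t in Ioo 0 R, {z : ℝ × ℝ | z.1 < z.2}.indicator
      (fun z => c z.1 * F z.2) (x, t) := by
    refine setLIntegral_congr_fun measurableSet_Ioo (fun x hx => ?_)
    have : ∀ t, {z : ℝ × ℝ | z.1 < z.2}.indicator (fun z => c z.1 * F z.2) (x, t)
        = (Ioi x).indicator (fun t => c x * F t) t := fun t => by
      simp [indicator]
    simp only [this]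
    rw [setLIntegral_indicator measurableSet_Ioi, lintegral_const_mul _ hF]
    congr 3
    ext t
    simp only [mem_inter_iff, mem_Ioi, mem_Ioo]
    constructor
    · rintro ⟨a, b⟩; exact ⟨a, hx.1.trans a, b⟩
    · rintro ⟨a, _, b⟩; exact ⟨a, b⟩
  have h2 : ∫⁻ t in Ioo 0 R, F t * ∫⁻ x in Ioo 0 t, c x
      = ∫⁻ t in Ioo 0 R, ∫⁻ x in Ioo 0 R, {z : ℝ × ℝ | z.1 < z.2}.indicator
      (fun z => c z.1 * F z.2) (x, t) := by
    refine setLIntegral_congr_fun measurableSet_Ioo (fun t ht => ?_)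
    have : ∀ x, {z : ℝ × ℝ | z.1 < z.2}.indicator (fun z => c z.1 * F z.2) (x, t)
        = (Iio t).indicator (fun x => F t * c x) x := fun x => by
      simp [indicator, mul_comm]
    simp only [this]
    rw [setLIntegral_indicator measurableSet_Iio, lintegral_const_mul _ hc]
    congr 3
    ext x
    simp only [mem_inter_iff, mem_Iio, mem_Ioo]
    constructor
    · rintro ⟨a, b⟩; exact ⟨b, a, b.trans ht.2⟩
    · rintro ⟨a, b, _⟩; exact ⟨b, a⟩
  rw [h1, h2]
  exact lintegral_lintegral_swap hm.aemeasurable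

lemma hardy_aux_holder (p q R δ x : ℝ) (hpq : p.HolderConjugate q) (hδ : 0 < δ) (hx : 0 < x)
    (f : ℝ → ℝ≥0∞) (hf : Measurable f) :
    (∫⁻ t in Ioo x R, f t) ^ p ≤
      ENNReal.ofReal (x ^ (-(δ * p)) * ((δ * q) ^ (p / q))⁻¹) *
      ∫⁻ t in Ioo x R, ENNReal.ofReal (t ^ ((1 / q + δ) * p)) * f t ^ p := by
  have hp := hpq.pos
  have hq := hpq.symm.pos
  have h1 : ∫⁻ t in Ioo x R, f t = ∫⁻ t in Ioo x R,
      ((fun t => ENNReal.ofReal (t ^ (1 / q + δ)) * f t) *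
        (fun t => ENNReal.ofReal (t ^ (-(1 / q + δ))))) t := by
    refine setLIntegral_congr_fun measurableSet_Ioo (fun t ht => ?_)
    have ht0 : 0 < t := hx.trans ht.1
    simp only [Pi.mul_apply]
    rw [mul_right_comm, ← ENNReal.ofReal_mul (by positivity), ← Real.rpow_add ht0]
    simp
  have h2 := ENNReal.lintegral_mul_le_Lp_mul_Lq (volume.restrict (Ioo x R)) hpq
    (f := fun t => ENNReal.ofReal (t ^ (1 / q + δ)) * f t)
    (g := fun t => ENNReal.ofReal (t ^ (-(1 / q + δ))))
    (by fun_prop) (by fun_prop)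
  rw [← h1] at h2
  have h3 : ∫⁻ t in Ioo x R, (ENNReal.ofReal (t ^ (1 / q + δ)) * f t) ^ p
      = ∫⁻ t in Ioo x R, ENNReal.ofReal (t ^ ((1 / q + δ) * p)) * f t ^ p := by
    refine setLIntegral_congr_fun measurableSet_Ioo (fun t ht => ?_)
    have ht0 : 0 < t := hx.trans ht.1
    rw [ENNReal.mul_rpow_of_nonneg _ _ hp.le, ENNReal.ofReal_rpow_of_pos (by positivity),
      ← Real.rpow_mul ht0.le]
  have h4 : ∫⁻ t in Ioo x R, (ENNReal.ofReal (t ^ (-(1 / q + δ)))) ^ q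
      ≤ ENNReal.ofReal (x ^ (-(δ * q)) / (δ * q)) := by
    rw [← hardy_aux_Ioi _ _ (by positivity) hx]
    refine le_trans (le_of_eq ?_) (lintegral_mono_set (Ioo_subset_Ioi_self (a := R)))
    refine setLIntegral_congr_fun measurableSet_Ioo (fun t ht => ?_)
    have ht0 : 0 < t := hx.trans ht.1
    try simp only
    rw [ENNReal.ofReal_rpow_of_pos (by positivity), ← Real.rpow_mul ht0.le]
    congr 2
    field_simp
    ring
  rw [h3] at h2
  calc (∫⁻ t in Ioo x R, f t) ^ p ≤ _ := ENNReal.rpow_le_rpow h2 hp.le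
    _ ≤ ((∫⁻ t in Ioo x R, ENNReal.ofReal (t ^ ((1 / q + δ) * p)) * f t ^ p) ^ (1 / p) *
        (ENNReal.ofReal (x ^ (-(δ * q)) / (δ * q))) ^ (1 / q)) ^ p := by
      gcongr
    _ = _ := by
      rw [ENNReal.mul_rpow_of_nonneg _ _ hp.le, ← ENNReal.rpow_mul, ← ENNReal.rpow_mul,
        one_div_mul_cancel hp.ne', ENNReal.rpow_one, mul_comm,
        ENNReal.ofReal_rpow_of_pos (by positivity)]
      congr 2
      rw [Real.div_rpow (by positivity) (by positivity), ← Real.rpow_mul hx.le, div_eq_mul_inv]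
      congr 2
      · field_simp
      · congr 1; ring

/-- Hardy's inequality, continuity of the right Hardy operator.
If `1 < p < ∞`, `0 < R < ∞`, `β + 1/p > 0` and `γ ≤ β + 1`, then there is `C > 0`
such that for all nonnegative measurable `f` on `(0,R)`,
`∫₀^R x^{βp} (∫ₓ^R f)^p dx ≤ C^p ∫₀^R x^{γp} f(x)^p dx`. -/
theorem hardy_right_continuous (p R β γ : ℝ) (hp : 1 < p) (hR : 0 < R)
    (hβ : 0 < β + 1 / p) (hγ : γ ≤ β + 1) :
    ∃ C : ℝ, 0 < C ∧ ∀ f : ℝ → ℝ≥0∞, Measurable f →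
      (∫⁻ x in Ioo (0 : ℝ) R,
          ENNReal.ofReal (x ^ (β * p)) * (∫⁻ t in Ioo x R, f t) ^ p)
        ≤ ENNReal.ofReal C ^ p *
          ∫⁻ x in Ioo (0 : ℝ) R, ENNReal.ofReal (x ^ (γ * p)) * f x ^ p := by
  obtain ⟨q, hpq⟩ : ∃ q, p.HolderConjugate q := ⟨_, Real.HolderConjugate.conjExponent hp⟩
  have hp0 := hpq.pos
  have hq0 := hpq.symm.pos
  have hq1 : 1 / q = 1 - 1 / p := by
    have := hpq.inv_add_inv_eq_one
    simp only [one_div]; linarith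
  obtain ⟨δ, hδdef⟩ : ∃ δ, δ = (β + 1 / p) / 2 := ⟨_, rfl⟩
  have hδ : 0 < δ := by rw [hδdef]; positivity
  have hβ' : β = 2 * δ - 1 / p := by rw [hδdef]; ring
  obtain ⟨K, hKdef⟩ : ∃ K, K = ((δ * q) ^ (p / q))⁻¹ := ⟨_, rfl⟩
  have hK : 0 < K := by rw [hKdef]; positivity
  obtain ⟨M, hMdef⟩ : ∃ M, M = K * (R ^ ((β + 1 - γ) * p) / (δ * p)) := ⟨_, rfl⟩
  have hM : 0 < M := by rw [hMdef]; positivity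
  refine ⟨M ^ (1 / p), by positivity, fun f hf => ?_⟩
  rw [ENNReal.ofReal_rpow_of_pos (by positivity), ← Real.rpow_mul hM.le,
    one_div_mul_cancel hp0.ne', Real.rpow_one]
  have hFm : Measurable (fun t : ℝ => ENNReal.ofReal (t ^ ((1 / q + δ) * p)) * f t ^ p) := by
    fun_prop
  have hcm : Measurable (fun x : ℝ => ENNReal.ofReal (x ^ (δ * p - 1))) := by fun_prop
  calc _ ≤ ∫⁻ x in Ioo (0 : ℝ) R, ENNReal.ofReal K * (ENNReal.ofReal (x ^ (δ * p - 1)) *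
          ∫⁻ t in Ioo x R, ENNReal.ofReal (t ^ ((1 / q + δ) * p)) * f t ^ p) := by
        refine setLIntegral_mono' measurableSet_Ioo (fun x hx => ?_)
        have hx0 : 0 < x := hx.1
        refine (mul_le_mul_right (hardy_aux_holder p q R δ x hpq hδ hx0 f hf) _).trans
          (le_of_eq ?_)
        rw [← mul_assoc, ← mul_assoc, ← ENNReal.ofReal_mul (by positivity),
          ← ENNReal.ofReal_mul hK.le, ← hKdef, ← mul_assoc, ← Real.rpow_add hx0, mul_comm K]
        congr 4
        rw [hβ']; field_simp; ring
    _ = ENNReal.ofReal K * ∫⁻ x in Ioo (0 : ℝ) R, (ENNReal.ofReal (x ^ (δ * p - 1)) *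
          ∫⁻ t in Ioo x R, ENNReal.ofReal (t ^ ((1 / q + δ) * p)) * f t ^ p) :=
        lintegral_const_mul' _ _ ENNReal.ofReal_ne_top
    _ = ENNReal.ofReal K * ∫⁻ t in Ioo (0 : ℝ) R,
          (ENNReal.ofReal (t ^ ((1 / q + δ) * p)) * f t ^ p) *
          ∫⁻ x in Ioo 0 t, ENNReal.ofReal (x ^ (δ * p - 1)) := by
        rw [hardy_aux_swap R _ _ hcm hFm]
    _ ≤ ENNReal.ofReal K * ∫⁻ t in Ioo (0 : ℝ) R,
          ENNReal.ofReal (R ^ ((β + 1 - γ) * p) / (δ * p)) *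
            (ENNReal.ofReal (t ^ (γ * p)) * f t ^ p) := by
        refine mul_le_mul_right (setLIntegral_mono' measurableSet_Ioo (fun t ht => ?_)) _
        have ht0 : 0 < t := ht.1
        rw [hardy_aux_Ioo _ _ (by positivity) ht0, mul_right_comm, ← mul_assoc,
          ← ENNReal.ofReal_mul (by positivity), ← ENNReal.ofReal_mul (by positivity)]
        refine mul_le_mul_left (ENNReal.ofReal_le_ofReal ?_) _
        rw [mul_div_assoc', div_mul_eq_mul_div, ← Real.rpow_add ht0]
        have e : (1 / q + δ) * p + δ * p = (β + 1 - γ) * p + γ * p := by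
          rw [hq1, hβ']; ring
        rw [e, Real.rpow_add ht0]
        have : 0 ≤ (β + 1 - γ) * p := mul_nonneg (by linarith) hp0.le
        have := ht.2.le
        gcongr
    _ = _ := by
        rw [lintegral_const_mul' _ _ ENNReal.ofReal_ne_top, ← mul_assoc,
          ← ENNReal.ofReal_mul hK.le, hMdef]
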